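/- arXiv:1902.06817 — 8 statements merged into one kernel-verified Lean document; each statement's English description precedes it below -/
import Mathlib

section
/- Let y be a real number with y ≠ 1, and define a sequence (c_j)_{j≥0} of real numbers by c_0 = y and c_{j+1} = (c_j·y − 1)/(c_j + y − 2). Then for every j ≥ 0 one has c_j = (y + j)/(j + 1), and for every j ≥ 1 the quantity c_{j−1} + y − 2 equals ((j+1)/j)·(y − 1); in particular c_{j−1} + y − 2 ≠ 0 for all j ≥ 1, so the sequence is well defined. -/
/-!
Since `α * β - 1 = (α - 1) * (β - 1) + (α + β - 2)`, processing two leaves with values `α` and `β`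
below a join node leaves one whose value `γ` satisfies
`1 / (γ - 1) = 1 / (α - 1) + 1 / (β - 1)`. In the coordinate `1 / (z - 1)` the recursion is
therefore the translation by `1 / (y - 1)`, so that `1 / (c j - 1) = (j + 1) / (y - 1)`.
-/

section JoinStep

variable {K : Type*} [Field K]

/-- The permanent value that the Diagonalize algorithm assigns to the leaf it removes when it
processes two sibling leaves with values `α` and `β` below a join node. -/
def joinPivot (α β : K) : K := α + β - 2

/-- The value that the Diagonalize algorithm assigns to the surviving leaf when it processes two
sibling leaves with values `α` and `β` below a join node. The algorithm uses this formula only when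
`joinPivot α β ≠ 0`; otherwise division by zero makes it `0`. -/
def joinUpdate (α β : K) : K := (α * β - 1) / joinPivot α β

theorem joinUpdate_eq_one_add {α β : K} (h : joinPivot α β ≠ 0) :
    joinUpdate α β = 1 + (α - 1) * (β - 1) / joinPivot α β := by
  have hnum : α * β - 1 = joinPivot α β + (α - 1) * (β - 1) := by
    unfold joinPivot
    ring
  rw [joinUpdate, hnum, add_div, div_self h]

theorem joinPivot_one_add_div (a : K) {m n : K} (hm : m ≠ 0) (hn : n ≠ 0) :
    joinPivot (1 + a / m) (1 + a / n) = (m + n) / (m * n) * a := by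
  unfold joinPivot
  field_simp
  ring

theorem joinPivot_one_add_div_ne_zero {a m n : K} (ha : a ≠ 0) (hm : m ≠ 0) (hn : n ≠ 0)
    (hmn : m + n ≠ 0) : joinPivot (1 + a / m) (1 + a / n) ≠ 0 := by
  rw [joinPivot_one_add_div a hm hn]
  exact mul_ne_zero (div_ne_zero hmn (mul_ne_zero hm hn)) ha

theorem joinUpdate_one_add_div {a m n : K} (ha : a ≠ 0) (hm : m ≠ 0) (hn : n ≠ 0)
    (hmn : m + n ≠ 0) : joinUpdate (1 + a / m) (1 + a / n) = 1 + a / (m + n) := by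
  rw [joinUpdate_eq_one_add (joinPivot_one_add_div_ne_zero ha hm hn hmn),
    joinPivot_one_add_div a hm hn, add_sub_cancel_left, add_sub_cancel_left]
  field_simp

theorem eq_one_add_div_of_joinUpdate [CharZero K] {y : K} (hy : y ≠ 1) {c : ℕ → K}
    (hc0 : c 0 = y) (hrec : ∀ j, c (j + 1) = joinUpdate (c j) y) (j : ℕ) :
    c j = 1 + (y - 1) / (j + 1) := by
  induction j with
  | zero => simp [hc0]
  | succ j ih =>
    have hstep := joinUpdate_one_add_div (sub_ne_zero.mpr hy) (Nat.cast_add_one_ne_zero j)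
      one_ne_zero (by exact_mod_cast Nat.cast_add_one_ne_zero (R := K) (j + 1))
    rw [div_one, add_sub_cancel, ← ih, ← hrec] at hstep
    rw [hstep, Nat.cast_succ]

end JoinStep

theorem diagonalize_join_closed_form_general {K : Type*} [Field K] [CharZero K] {y : K}
    (hy : y ≠ 1) {c : ℕ → K} (hc0 : c 0 = y)
    (hrec : ∀ j : ℕ, c (j + 1) = (c j * y - 1) / (c j + y - 2)) :
    (∀ j : ℕ, c j = (y + (j : K)) / ((j : K) + 1)) ∧
    (∀ j : ℕ, 1 ≤ j →
      c (j - 1) + y - 2 = (((j : K) + 1) / (j : K)) * (y - 1) ∧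
      c (j - 1) + y - 2 ≠ 0) := by
  have hc := eq_one_add_div_of_joinUpdate hy hc0 hrec
  refine ⟨fun j => ?_, fun j hj => ?_⟩
  · rw [hc, one_add_div (Nat.cast_add_one_ne_zero j)]
    ring
  · have hj0 : (j : K) ≠ 0 := Nat.cast_ne_zero.mpr (by lia)
    have hj1 : (j : K) + 1 ≠ 0 := Nat.cast_add_one_ne_zero j
    have hprev : c (j - 1) = 1 + (y - 1) / j := by
      rw [hc, ← Nat.cast_add_one, Nat.sub_add_cancel hj]
    have hpivot : c (j - 1) + y - 2 = joinPivot (1 + (y - 1) / j) (1 + (y - 1) / 1) := by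
      rw [div_one, add_sub_cancel, hprev, joinPivot]
    rw [hpivot]
    refine ⟨?_, joinPivot_one_add_div_ne_zero (sub_ne_zero.mpr hy) hj0 one_ne_zero hj1⟩
    rw [joinPivot_one_add_div _ hj0 one_ne_zero, mul_one]

/-- Closed form for the Diagonalize algorithm assignments at a join node ⊗:
if `y ≠ 1`, `c 0 = y` and `c (j+1) = (c j * y - 1)/(c j + y - 2)`, then
`c j = (y + j)/(j + 1)` for all `j`, and for `j ≥ 1` one has
`c (j-1) + y - 2 = ((j+1)/j) * (y - 1) ≠ 0`. -/
theorem diagonalize_join_closed_form (y : ℝ) (hy : y ≠ 1) (c : ℕ → ℝ)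
    (hc0 : c 0 = y)
    (hrec : ∀ j : ℕ, c (j + 1) = (c j * y - 1) / (c j + y - 2)) :
    (∀ j : ℕ, c j = (y + (j : ℝ)) / ((j : ℝ) + 1)) ∧
    (∀ j : ℕ, 1 ≤ j →
      c (j - 1) + y - 2 = (((j : ℝ) + 1) / (j : ℝ)) * (y - 1) ∧
      c (j - 1) + y - 2 ≠ 0) :=
  diagonalize_join_closed_form_general hy hc0 hrec
end

section
/- Fix a sequence of integers (a_k)_{k≥1} and an even index i. Define integers (x_n)_{n≥i} by x_i = 0 and, for n ≥ i, x_{n+1} = a_{n+1}·x_n if n is odd and x_{n+1} = a_{n+1}·x_n − a_{n+1} + 1 if n is even. Then for every j ≥ 1: x_{i+j} = Σ_{k=1}^{j} γ_{i+j,i+k}·(−1)^k + 1 if i+j is odd, and x_{i+j} = Σ_{k=1}^{j} γ_{i+j,i+k}·(−1)^k if i+j is even. -/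
/-- `gam a n l` is the product `a n * a (n-1) * ⋯ * a l`, i.e. γ_{n,l}. -/
def gam (a : ℕ → ℤ) (n l : ℕ) : ℤ := ∏ k ∈ Finset.Icc l n, a k

/-
Subtracting `1` from `x n` at the odd indices turns the two cases of the recurrence into the single
affine recurrence `y (n + 1) = a (n + 1) * y n + a (n + 1) * (-1) ^ (n + 1)`; the alternating sum is
its variation of constants formula.
-/

section AffineRecurrence

variable {R : Type*}

theorem affine_recurrence_eq_prod_mul_add_sum [CommSemiring R] {a b y : ℕ → R} {i n : ℕ}
    (hy : ∀ m, i ≤ m → y (m + 1) = a (m + 1) * y m + b (m + 1)) (hin : i ≤ n) :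
    y n = (∏ m ∈ Finset.Ioc i n, a m) * y i +
      ∑ k ∈ Finset.Ioc i n, (∏ m ∈ Finset.Ioc k n, a m) * b k := by
  induction n, hin using Nat.le_induction with
  | base => simp
  | succ n hin ih =>
    have sum_succ :
        ∑ k ∈ Finset.Ioc i (n + 1), (∏ m ∈ Finset.Ioc k (n + 1), a m) * b k =
          a (n + 1) * ∑ k ∈ Finset.Ioc i n, (∏ m ∈ Finset.Ioc k n, a m) * b k + b (n + 1) := by
      rw [Finset.sum_Ioc_succ_top hin, Finset.Ioc_self, Finset.prod_empty, one_mul, Finset.mul_sum]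
      congr 1
      refine Finset.sum_congr rfl fun k hk => ?_
      rw [Finset.prod_Ioc_succ_top (Finset.mem_Ioc.mp hk).2]
      ring
    rw [sum_succ, Finset.prod_Ioc_succ_top hin, hy n hin, ih]
    ring

theorem sub_ite_odd_succ_of_eq_ite [Ring R] {c u v : R} {n : ℕ}
    (h : v = if Odd n then c * u else c * u - c + 1) :
    v - (if Odd (n + 1) then 1 else 0) =
      c * (u - if Odd n then 1 else 0) + c * (-1) ^ (n + 1) := by
  rcases n.even_or_odd with hn | hn
  · have not_odd : ¬Odd n := Nat.not_odd_iff_even.mpr hn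
    rw [h, if_neg not_odd, if_neg not_odd, if_pos hn.add_one, hn.add_one.neg_one_pow]
    noncomm_ring
  · have not_odd_succ : ¬Odd (n + 1) := Nat.not_odd_iff_even.mpr hn.add_one
    rw [h, if_pos hn, if_pos hn, if_neg not_odd_succ, hn.add_one.neg_one_pow]
    noncomm_ring

theorem sum_Ioc_add_left_eq_sum_Icc {M : Type*} [AddCommMonoid M] (f : ℕ → M) (i j : ℕ) :
    ∑ k ∈ Finset.Ioc i (i + j), f k = ∑ k ∈ Finset.Icc 1 j, f (i + k) := by
  rw [← Finset.Icc_add_one_left_eq_Ioc, ← Finset.map_add_left_Icc, Finset.sum_map]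
  rfl

theorem recurrence_even_start_general [CommRing R] {a x : ℕ → R} {i : ℕ}
    (hrec : ∀ n, i ≤ n → x (n + 1) =
      if Odd n then a (n + 1) * x n else a (n + 1) * x n - a (n + 1) + 1) (j : ℕ) :
    x (i + j) = (∏ m ∈ Finset.Ioc i (i + j), a m) * (x i - if Odd i then 1 else 0) +
      ∑ k ∈ Finset.Icc 1 j, (∏ m ∈ Finset.Icc (i + k) (i + j), a m) * (-1) ^ (i + k) +
      if Odd (i + j) then 1 else 0 := by
  have shifted := affine_recurrence_eq_prod_mul_add_sum
    (y := fun n => x n - if Odd n then 1 else 0) (b := fun n => a n * (-1) ^ n)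
    (fun n hn => sub_ite_odd_succ_of_eq_ite (hrec n hn)) (Nat.le_add_right i j)
  rw [sub_eq_iff_eq_add.mp shifted, sum_Ioc_add_left_eq_sum_Icc]
  congr 2
  refine Finset.sum_congr rfl fun k hk => ?_
  have hkj : i + k ≤ i + j := Nat.add_le_add_left (Finset.mem_Icc.mp hk).2 i
  rw [← mul_assoc, Finset.prod_Ioc_mul_eq_prod_Icc hkj]

end AffineRecurrence

/-- Solution of the inverse Diagonalize recurrence started from value `0` at an
even level `i`: with `x i = 0` and `x (n+1) = a (n+1) * x n` for odd `n`,
`x (n+1) = a (n+1) * x n - a (n+1) + 1` for even `n`, one has for every `j ≥ 1`: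
`x (i+j) = ∑_{k=1}^{j} γ_{i+j,i+k} (-1)^k + 1` if `i+j` is odd, and
`x (i+j) = ∑_{k=1}^{j} γ_{i+j,i+k} (-1)^k` if `i+j` is even. -/
theorem recurrence_even_start (a : ℕ → ℤ) (i : ℕ) (hi : Even i)
    (x : ℕ → ℤ) (hx : x i = 0)
    (hrec : ∀ n : ℕ, i ≤ n → x (n + 1) =
      if Odd n then a (n + 1) * x n else a (n + 1) * x n - a (n + 1) + 1) :
    ∀ j : ℕ, 1 ≤ j →
      (Odd (i + j) →
        x (i + j) = (∑ k ∈ Finset.Icc 1 j, gam a (i + j) (i + k) * (-1) ^ k) + 1) ∧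
      (Even (i + j) →
        x (i + j) = ∑ k ∈ Finset.Icc 1 j, gam a (i + j) (i + k) * (-1) ^ k) := by
  refine fun j _ => ⟨fun hj => ?_, fun hj => ?_⟩ <;>
    simpa [gam, hx, hi, hj, pow_add, hi.neg_one_pow, ← Nat.not_even_iff_odd] using
      recurrence_even_start_general hrec j
end

section
/- Fix a sequence of integers (a_k)_{k≥1} and an odd index i. Define integers (x_n)_{n≥i} by x_i = 1 and, for n ≥ i, x_{n+1} = a_{n+1}·x_n if n is odd and x_{n+1} = a_{n+1}·x_n − a_{n+1} + 1 if n is even. Then for every j ≥ 1: x_{i+j} = Σ_{k=1}^{j} γ_{i+j,i+k}·(−1)^{k+1} + 1 if i+j is odd, and x_{i+j} = Σ_{k=1}^{j} γ_{i+j,i+k}·(−1)^{k+1} if i+j is even. -/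
/-!
Subtracting from `x n` the parity of `n` merges the two cases of the recurrence into the single
linear recurrence `y (n + 1) = a (n + 1) * (y n + (-1) ^ (n + 1))`. Unrolling it, the forcing term
`(-1) ^ m` introduced at level `m` is multiplied by every later coefficient `a m, …, a n`, which is
`γ_{n,m}`. Starting from `x i = 1` at an odd `i` means `y i = 0`, so only the forcing terms survive.
-/

section LinearRecurrence

open Finset

variable {R : Type*}

theorem eq_prod_mul_add_sum_of_linear_recurrence [CommSemiring R] {a b y : ℕ → R} {i : ℕ}
    (hy : ∀ n, i ≤ n → y (n + 1) = a (n + 1) * (y n + b (n + 1))) (j : ℕ) :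
    y (i + j) = (∏ l ∈ Icc (i + 1) (i + j), a l) * y i +
      ∑ k ∈ Icc 1 j, (∏ l ∈ Icc (i + k) (i + j), a l) * b (i + k) := by
  induction j with
  | zero => simp
  | succ j ih =>
    have prod_succ {m : ℕ} (hm : m ≤ i + j + 1) :
        ∏ l ∈ Icc m (i + j + 1), a l = (∏ l ∈ Icc m (i + j), a l) * a (i + j + 1) :=
      prod_Icc_succ_top hm a
    have sum_succ :
        ∑ k ∈ Icc 1 (j + 1), (∏ l ∈ Icc (i + k) (i + j + 1), a l) * b (i + k) =
          a (i + j + 1) * (∑ k ∈ Icc 1 j, (∏ l ∈ Icc (i + k) (i + j), a l) * b (i + k)) +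
            a (i + j + 1) * b (i + j + 1) := by
      rw [sum_Icc_succ_top (by lia), mul_sum, ← add_assoc i j 1, Icc_self, prod_singleton]
      congr 1
      refine sum_congr rfl fun k hk => ?_
      rw [prod_succ (by grind)]
      ring
    rw [← add_assoc i j 1, hy _ (Nat.le_add_right i j), ih, sum_succ, prod_succ (by lia)]
    ring

theorem sub_ite_odd_succ_eq [Ring R] {c u v : R} {n : ℕ}
    (h : v = if Odd n then c * u else c * u - c + 1) :
    v - (if Odd (n + 1) then 1 else 0) =
      c * (u - (if Odd n then 1 else 0) + (-1) ^ (n + 1)) := by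
  rcases n.even_or_odd with hn | hn
  · have hn' : ¬Odd n := Nat.not_odd_iff_even.mpr hn
    rw [h, if_neg hn', if_neg hn', if_pos hn.add_one, hn.add_one.neg_one_pow]
    noncomm_ring
  · have hn' : ¬Odd (n + 1) := Nat.not_odd_iff_even.mpr hn.add_one
    rw [h, if_pos hn, if_pos hn, if_neg hn', hn.add_one.neg_one_pow]
    noncomm_ring

theorem recurrence_odd_start_general [CommRing R] (a : ℕ → R) (i : ℕ) (x : ℕ → R)
    (hrec : ∀ n : ℕ, i ≤ n → x (n + 1) =
      if Odd n then a (n + 1) * x n else a (n + 1) * x n - a (n + 1) + 1) (j : ℕ) :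
    x (i + j) = (∏ l ∈ Icc (i + 1) (i + j), a l) * (x i - if Odd i then 1 else 0) +
      ∑ k ∈ Icc 1 j, (∏ l ∈ Icc (i + k) (i + j), a l) * (-1) ^ (i + k) +
      if Odd (i + j) then 1 else 0 :=
  sub_eq_iff_eq_add.mp <|
    eq_prod_mul_add_sum_of_linear_recurrence (y := fun n => x n - if Odd n then 1 else 0)
      (b := fun n => (-1) ^ n) (fun n hn => sub_ite_odd_succ_eq (hrec n hn)) j

end LinearRecurrence

/-- Solution of the inverse Diagonalize recurrence started from value `1` at an
odd level `i`: with `x i = 1` and `x (n+1) = a (n+1) * x n` for odd `n`,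
`x (n+1) = a (n+1) * x n - a (n+1) + 1` for even `n`, one has for every `j ≥ 1`:
`x (i+j) = ∑_{k=1}^{j} γ_{i+j,i+k} (-1)^(k+1) + 1` if `i+j` is odd, and
`x (i+j) = ∑_{k=1}^{j} γ_{i+j,i+k} (-1)^(k+1)` if `i+j` is even. -/
theorem recurrence_odd_start (a : ℕ → ℤ) (i : ℕ) (hi : Odd i)
    (x : ℕ → ℤ) (hx : x i = 1)
    (hrec : ∀ n : ℕ, i ≤ n → x (n + 1) =
      if Odd n then a (n + 1) * x n else a (n + 1) * x n - a (n + 1) + 1) :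
    ∀ j : ℕ, 1 ≤ j →
      (Odd (i + j) →
        x (i + j) = (∑ k ∈ Finset.Icc 1 j, gam a (i + j) (i + k) * (-1) ^ (k + 1)) + 1) ∧
      (Even (i + j) →
        x (i + j) = ∑ k ∈ Finset.Icc 1 j, gam a (i + j) (i + k) * (-1) ^ (k + 1)) := by
  refine fun j _ => ⟨fun hj => ?_, fun hj => ?_⟩ <;>
    simp [recurrence_odd_start_general a i x hrec j, gam, hi, hx, hj, hi.neg_one_pow, pow_add]
end

section
/- Fix a sequence of integers (a_k)_{k≥1}, an index i ≥ 1, and an odd integer r with r > i. Define integers (x_n)_{n≥i} by x_i = 0 if i is even and x_i = 1 if i is odd, and for n ≥ i, x_{n+1} = a_{n+1}·x_n if n is odd and x_{n+1} = a_{n+1}·x_n − a_{n+1} + 1 if n is even. Then x_r = Σ_{k=1}^{r−i} γ_{r,i+k}·(−1)^k + 1 if i is even, and x_r = Σ_{k=1}^{r−i} γ_{r,i+k}·(−1)^{k+1} + 1 if i is odd. -/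
/-!
Subtracting from `x n` the value prescribed at the leaves of level `n` (`0` for even `n`, `1` for
odd `n`) turns both branches of the recurrence into `y (n + 1) = a (n + 1) * (y n + (-1) ^ (n + 1))`
with `y i = 0`. Unrolling this, the term `(-1) ^ l` entering at step `l` picks up the factor
`γ_{r,l}` by step `r`.
-/

open Finset

theorem eq_prod_mul_add_sum_of_succ_eq_mul_add {R : Type*} [CommSemiring R] {a b y : ℕ → R} {i : ℕ}
    (hy : ∀ n, i ≤ n → y (n + 1) = a (n + 1) * (y n + b (n + 1))) {r : ℕ} (hir : i ≤ r) :
    y r = (∏ j ∈ Icc (i + 1) r, a j) * y i +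
      ∑ l ∈ Icc (i + 1) r, (∏ j ∈ Icc l r, a j) * b l := by
  induction r, hir using Nat.le_induction with
  | base => simp
  | succ n hin ih =>
    have hprod : ∀ l ∈ Icc (i + 1) n,
        (∏ j ∈ Icc l (n + 1), a j) * b l = a (n + 1) * ((∏ j ∈ Icc l n, a j) * b l) := by
      intro l hl
      rw [prod_Icc_succ_top (by grind)]
      ring
    rw [hy n hin, ih, prod_Icc_succ_top (by lia), sum_Icc_succ_top (by lia), sum_congr rfl hprod,
      ← mul_sum, Icc_self, prod_singleton]
    ring

section LeafValue

variable {R : Type*} [CommRing R]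

/-- The value that Diagonalize must leave at every leaf of the truncated cotree at level `n`. -/
def leafValue (R : Type*) [Zero R] [One R] (n : ℕ) : R := if Even n then 0 else 1

theorem leafValue_of_odd {n : ℕ} (hn : Odd n) : leafValue R n = 1 :=
  if_neg (Nat.not_even_iff_odd.mpr hn)

theorem sub_leafValue_succ {n : ℕ} {c u v : R}
    (h : v = if Odd n then c * u else c * u - c + 1) :
    v - leafValue R (n + 1) = c * (u - leafValue R n + (-1) ^ (n + 1)) := by
  rcases n.even_or_odd with hn | hn
  · simp only [h, leafValue, Nat.not_odd_iff_even.mpr hn, hn, hn.add_one.neg_one_pow,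
      Nat.even_add_one, not_true, if_true, if_false]
    ring
  · simp only [h, leafValue, hn, Nat.not_even_iff_odd.mpr hn, hn.add_one.neg_one_pow,
      Nat.even_add_one, not_false_iff, if_true, if_false]
    ring

theorem eq_sum_prod_mul_neg_one_pow_add_leafValue {a x : ℕ → R} {i r : ℕ} (hir : i ≤ r)
    (hx : x i = leafValue R i)
    (hrec : ∀ n, i ≤ n → x (n + 1) =
      if Odd n then a (n + 1) * x n else a (n + 1) * x n - a (n + 1) + 1) :
    x r = (∑ l ∈ Icc (i + 1) r, (∏ j ∈ Icc l r, a j) * (-1) ^ l) + leafValue R r := by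
  have hsol := eq_prod_mul_add_sum_of_succ_eq_mul_add (y := fun n ↦ x n - leafValue R n)
    (b := fun n ↦ (-1) ^ n) (fun n hn ↦ sub_leafValue_succ (hrec n hn)) hir
  simpa only [hx, sub_self, mul_zero, zero_add, sub_eq_iff_eq_add] using hsol

theorem input_value_r_odd_general {a x : ℕ → R} {i r : ℕ} (hir : i ≤ r)
    (hx : x i = leafValue R i)
    (hrec : ∀ n, i ≤ n → x (n + 1) =
      if Odd n then a (n + 1) * x n else a (n + 1) * x n - a (n + 1) + 1) :
    (Even i → x r =
      (∑ k ∈ Icc 1 (r - i), (∏ j ∈ Icc (i + k) r, a j) * (-1) ^ k) + leafValue R r) ∧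
    (Odd i → x r =
      (∑ k ∈ Icc 1 (r - i), (∏ j ∈ Icc (i + k) r, a j) * (-1) ^ (k + 1)) + leafValue R r) := by
  have hshift : Icc (i + 1) r = (Icc 1 (r - i)).map (addLeftEmbedding i) := by
    rw [map_add_left_Icc, Nat.add_sub_cancel' hir]
  rw [eq_sum_prod_mul_neg_one_pow_add_leafValue hir hx hrec, hshift, sum_map]
  constructor <;> intro hi <;>
    simp only [addLeftEmbedding_apply, pow_add, hi.neg_one_pow, one_mul, pow_one,
      mul_comm ((-1 : R) ^ _)]

end LeafValue

/-- For `r` odd with `r > i ≥ 1`, the input value `x_r^i` retrieved by the inverse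
Diagonalize recurrence (started from `0` at an even level `i`, resp. `1` at an odd
level `i`) satisfies `x r = ∑_{k=1}^{r-i} γ_{r,i+k} (-1)^k + 1` if `i` is even, and
`x r = ∑_{k=1}^{r-i} γ_{r,i+k} (-1)^(k+1) + 1` if `i` is odd. -/
theorem input_value_r_odd (a : ℕ → ℤ) (i r : ℕ) (hi : 1 ≤ i) (hr : Odd r) (hir : i < r)
    (x : ℕ → ℤ) (hx : x i = if Even i then 0 else 1)
    (hrec : ∀ n : ℕ, i ≤ n → x (n + 1) =
      if Odd n then a (n + 1) * x n else a (n + 1) * x n - a (n + 1) + 1) :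
    (Even i →
      x r = (∑ k ∈ Finset.Icc 1 (r - i), gam a r (i + k) * (-1) ^ k) + 1) ∧
    (Odd i →
      x r = (∑ k ∈ Finset.Icc 1 (r - i), gam a r (i + k) * (-1) ^ (k + 1)) + 1) := by
  simpa only [gam, leafValue_of_odd hr] using input_value_r_odd_general hir.le hx hrec
end

section
/- Let r ≥ 1 be odd and let a_1, …, a_r be integers with a_i ≥ 2 for all i. Let A be the real adjacency matrix of the graph G(a_1,…,a_r). Then the dimension of ker(A + I) equals a_1·a_2·⋯·a_{r−1}·(a_r − 1); that is, the multiplicity of the eigenvalue −1 of G(a_1,…,a_r) is a_1 a_2 ⋯ a_{r−1}(a_r − 1). -/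
/-- The cograph with balanced cotree `T_G(a_1,…,a_{r-1},0|0,…,0,a_r)`:
vertices are tuples `(v_1,…,v_r)` with `v_i ∈ {1,…,a_i}` (here indexed by `Fin r`,
coordinate `i : Fin r` corresponding to paper index `i+1`), two distinct tuples
being adjacent iff the least 1-based index at which they differ is odd
(equivalently, the least 0-based index is even). -/
def balG (r : ℕ) (a : ℕ → ℕ) :
    SimpleGraph ((i : Fin r) → Fin (a ((i : ℕ) + 1))) :=
  SimpleGraph.fromRel (fun u v => ∃ i : Fin r,
    u i ≠ v i ∧ Even (i : ℕ) ∧ ∀ j : Fin r, (j : ℕ) < (i : ℕ) → u j = v j)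

open scoped Classical in
/-- The real adjacency matrix of `balG r a`. -/
noncomputable def adjMat (r : ℕ) (a : ℕ → ℕ) :
    Matrix ((i : Fin r) → Fin (a ((i : ℕ) + 1))) ((i : Fin r) → Fin (a ((i : ℕ) + 1))) ℝ :=
  Matrix.of fun u v => if (balG r a).Adj u v then 1 else 0

/-!
Write `A_r` for the adjacency matrix of `G(a_1, …, a_r)`. Whether two nodes of depth `r + 1` with
distinct parents are adjacent depends only on their parents, and siblings are adjacent iff `r` is
even. So `A_{r+1}` (`r` odd), respectively `A_{r+1} + 1` (`r` even), is obtained from `A_r`,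
respectively `A_r + 1`, by replacing every entry by a constant block of size `a_{r+1}`.

For odd `r` it follows that `A_r + 1` has the same rank as `A_{r-1} + 1`, and it remains to see that
`-1` is not an eigenvalue of `A_{r-1}`. The nonzero eigenvalues of a blown-up matrix are `a_{r+1}`
times eigenvalues of the original one. Hence an eigenvalue of `A_{r+1}` in `(-1, 0)` yields one of
`A_r` in `(-1, 0)`; since `A_0 = 0`, there is none at any depth. Finally, an eigenvalue `-1` of
`A_{r-1}` would give the eigenvalue `-1 / a_{r-1} ∈ (-1, 0)` of `A_{r-2}`.
-/

theorem mem_Ioo_of_natCast_mul_mem_Ioo {K : Type*} [Semiring K] [LinearOrder K]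
    [IsStrictOrderedRing K] {c : ℕ} {x : K} (h : c * x ∈ Set.Ioo 0 1) : x ∈ Set.Ioo 0 1 := by
  have x_pos : 0 < x := pos_of_mul_pos_right h.1 c.cast_nonneg
  have c_ne_zero : c ≠ 0 := by
    rintro rfl
    simp at h
  exact ⟨x_pos, (le_mul_of_one_le_left x_pos.le (Nat.one_le_cast.2 (by omega))).trans_lt h.2⟩

section Matrix

open Matrix Finset

variable {α β γ δ K : Type*} [Fintype α] [Fintype β]

theorem rank_submatrix_of_surjective [CommSemiring K] [StrongRankCondition K] {ρ : γ → δ}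
    {π : α → β} (hρ : Function.Surjective ρ) (hπ : Function.Surjective π) (M : Matrix δ β K) :
    (M.submatrix ρ π).rank = M.rank := by
  obtain ⟨σ, hσ⟩ := hρ.hasRightInverse
  obtain ⟨τ, hτ⟩ := hπ.hasRightInverse
  refine le_antisymm (M.rank_submatrix_le ρ π) ?_
  calc M.rank = ((M.submatrix ρ π).submatrix σ τ).rank := by
        rw [submatrix_submatrix, hσ.comp_eq_id, hτ.comp_eq_id, submatrix_id_id]
    _ ≤ (M.submatrix ρ π).rank := rank_submatrix_le _ σ τ

theorem finrank_ker_toLin' [DecidableEq α] [Field K] (M : Matrix γ α K) :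
    Module.finrank K (LinearMap.ker (toLin' M)) = Fintype.card α - M.rank := by
  have rank_add_nullity := (toLin' M).finrank_range_add_finrank_ker
  rw [Module.finrank_fintype_fun_eq_card] at rank_add_nullity
  exact Nat.eq_sub_of_add_eq' rank_add_nullity

theorem mem_spectrum_iff_exists_mulVec [DecidableEq α] [Field K] {M : Matrix α α K} {μ : K} :
    μ ∈ spectrum K M ↔ ∃ f ≠ 0, M *ᵥ f = μ • f := by
  rw [← spectrum_toLin', ← Module.End.hasEigenvalue_iff_mem_spectrum]
  constructor
  · intro h
    obtain ⟨f, hf⟩ := h.exists_hasEigenvector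
    exact ⟨f, hf.2, hf.apply_eq_smul⟩
  · rintro ⟨f, hf, hMf⟩
    exact Module.End.hasEigenvalue_of_hasEigenvector
      (Module.End.hasEigenvector_iff.2 ⟨Module.End.mem_eigenspace_iff.2 hMf, hf⟩)

theorem add_one_mem_spectrum_add_one_iff [DecidableEq α] [CommRing K] {M : Matrix α α K} {μ : K} :
    μ + 1 ∈ spectrum K (M + 1) ↔ μ ∈ spectrum K M := by
  rw [add_comm M, ← map_one (algebraMap K (Matrix α α K)), spectrum.add_mem_add_iff]

variable [DecidableEq β] {π : α → β}

theorem submatrix_mulVec [NonUnitalNonAssocSemiring K] (M : Matrix δ β K) (ρ : γ → δ) (f : α → K) :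
    M.submatrix ρ π *ᵥ f = (M *ᵥ fun b ↦ ∑ x with π x = b, f x) ∘ ρ := by
  ext x
  simp only [mulVec, dotProduct, submatrix_apply, Function.comp_apply, mul_sum]
  rw [← sum_fiberwise univ π]
  refine sum_congr rfl fun b _ ↦ sum_congr rfl fun y hy ↦ ?_
  rw [(mem_filter.1 hy).2]

-- Summing an eigenvector of the blown-up matrix over the fibres of `π` gives one of `M`.
theorem exists_mem_spectrum_of_submatrix [DecidableEq α] [Field K] {c : ℕ}
    (hπ : ∀ b, #{x | π x = b} = c) {M : Matrix β β K} {μ : K} (hμ : μ ≠ 0)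
    (h : μ ∈ spectrum K (M.submatrix π π)) : ∃ ν ∈ spectrum K M, c * ν = μ := by
  obtain ⟨f, hf, hMf⟩ := mem_spectrum_iff_exists_mulVec.1 h
  set g : β → K := fun b ↦ ∑ x with π x = b, f x
  have hMg : (M *ᵥ g) ∘ π = μ • f := by rw [← submatrix_mulVec, hMf]
  have g_ne_zero : g ≠ 0 := by
    intro hg0
    rw [hg0, mulVec_zero] at hMg
    exact smul_ne_zero hμ hf hMg.symm
  have eigen : (c : K) • M *ᵥ g = μ • g := by
    ext b
    calc (c : K) * (M *ᵥ g) b = ∑ x with π x = b, (M *ᵥ g) b := by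
          rw [sum_const, hπ, nsmul_eq_mul]
      _ = ∑ x with π x = b, (μ • f) x := by
          refine sum_congr rfl fun x hx ↦ ?_
          rw [← hMg, Function.comp_apply, (mem_filter.1 hx).2]
      _ = μ * g b := (mul_sum _ _ _).symm
  have c_ne_zero : (c : K) ≠ 0 := by
    intro hc
    rw [hc, zero_smul] at eigen
    exact smul_ne_zero hμ g_ne_zero eigen.symm
  refine ⟨μ / c, mem_spectrum_iff_exists_mulVec.2 ⟨g, g_ne_zero, ?_⟩, mul_div_cancel₀ μ c_ne_zero⟩
  rw [div_eq_inv_mul, mul_smul, ← eigen, inv_smul_smul₀ c_ne_zero]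

end Matrix

namespace balG

open Finset

/-- The nodes of the cotree at depth `r`, encoded by the path from the root; they are the vertices
of `balG r a`. -/
abbrev Node (r : ℕ) (a : ℕ → ℕ) : Type := (i : Fin r) → Fin (a (i + 1))

variable {r : ℕ} {a : ℕ → ℕ}

/-- The parent of a node in the cotree. It is `Fin.init`, with the type family spelled as in
`Node`. -/
def parent (u : Node (r + 1) a) : Node r a := fun i ↦ u i.castSucc

theorem ext_parent_iff {u v : Node (r + 1) a} :
    u = v ↔ parent u = parent v ∧ u (Fin.last r) = v (Fin.last r) := by
  simp only [funext_iff, Fin.forall_fin_succ', parent]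

theorem card_filter_parent_eq (p : Node r a) : #{u | parent u = p} = a (r + 1) := by
  let child : Fin (a (r + 1)) → Node (r + 1) a :=
    Fin.snoc (α := fun i : Fin (r + 1) ↦ Fin (a (i + 1))) p
  have parent_child (x) : parent (child x) = p := Fin.init_snoc _ _
  have child_last (x) : child x (Fin.last r) = x := Fin.snoc_last _ _
  calc #{u | parent u = p} = #(univ : Finset (Fin (a (r + 1)))) :=
        card_nbij' (fun u ↦ u (Fin.last r)) child (by simp) (by simp [parent_child])
          (fun u hu ↦ ext_parent_iff.2 ⟨(parent_child _).trans (mem_filter.1 hu).2.symm,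
            child_last _⟩)
          (fun x _ ↦ child_last x)
    _ = a (r + 1) := card_fin _

theorem parent_surjective (ha : a (r + 1) ≠ 0) :
    Function.Surjective (parent : Node (r + 1) a → Node r a) := by
  intro p
  have fiber_nonempty : #{u | parent u = p} ≠ 0 := by rwa [card_filter_parent_eq]
  obtain ⟨u, hu⟩ := card_ne_zero.1 fiber_nonempty
  exact ⟨u, (mem_filter.1 hu).2⟩

theorem card_node : Fintype.card (Node r a) = ∏ k ∈ Icc 1 r, a k := by
  simp only [Fintype.card_pi, Fintype.card_fin]
  rw [Fin.prod_univ_eq_prod_range (fun i ↦ a (i + 1)) r, range_eq_Ico, prod_Ico_add' a 0 r 1]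
  rfl

theorem adj_iff {u v : Node r a} :
    (balG r a).Adj u v ↔ ∃ i : Fin r, u i ≠ v i ∧ Even (i : ℕ) ∧ ∀ j < i, u j = v j := by
  simp only [balG, SimpleGraph.fromRel_adj, ne_comm (a := v _), eq_comm (a := v _), or_self]
  exact and_iff_right_of_imp fun ⟨i, hi, _⟩ huv ↦ hi (congrFun huv i)

theorem adj_succ_iff {u v : Node (r + 1) a} :
    (balG (r + 1) a).Adj u v ↔
      (balG r a).Adj (parent u) (parent v) ∨ Even r ∧ parent u = parent v ∧ u ≠ v := by
  simp only [adj_iff, Fin.exists_fin_succ', Fin.forall_fin_succ', Fin.castSucc_lt_castSucc_iff,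
    (Fin.castSucc_lt_last _).not_gt, Fin.castSucc_lt_last, lt_irrefl, false_imp_iff, and_true,
    true_imp_iff, Fin.val_castSucc, Fin.val_last, ne_eq, ext_parent_iff (u := u), funext_iff,
    parent]
  exact or_congr_right (by grind)

section AdjMatrix

theorem spectrum_adjMatrix_zero (K : Type*) [Field K] (a : ℕ → ℕ) [DecidableRel (balG 0 a).Adj] :
    spectrum K ((balG 0 a).adjMatrix K) = {0} := by
  have adjMatrix_eq_zero : (balG 0 a).adjMatrix K = 0 := by
    ext u v
    simp [SimpleGraph.adjMatrix_apply, Subsingleton.elim u v]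
  rw [adjMatrix_eq_zero, spectrum.zero_eq]

variable [DecidableRel (balG r a).Adj] [DecidableRel (balG (r + 1) a).Adj]

theorem adjMatrix_succ_of_odd (K : Type*) [Zero K] [One K] (hr : Odd r) :
    (balG (r + 1) a).adjMatrix K = ((balG r a).adjMatrix K).submatrix parent parent := by
  ext u v
  simp [SimpleGraph.adjMatrix_apply, adj_succ_iff, Nat.not_even_iff_odd.2 hr]

theorem adjMatrix_succ_add_one_of_even (K : Type*) [NonAssocSemiring K] (hr : Even r) :
    (balG (r + 1) a).adjMatrix K + 1 = ((balG r a).adjMatrix K + 1).submatrix parent parent := by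
  ext u v
  simp only [Matrix.add_apply, Matrix.one_apply, Matrix.submatrix_apply,
    SimpleGraph.adjMatrix_apply, adj_succ_iff, hr, true_and]
  by_cases hp : parent u = parent v
  · by_cases huv : u = v <;> simp [hp, huv]
  · have huv : u ≠ v := fun h ↦ hp (congrArg parent h)
    simp [hp, huv]

variable {K : Type*} [Field K]

theorem exists_mem_spectrum_of_odd (hr : Odd r) {μ : K} (hμ : μ ≠ 0)
    (h : μ ∈ spectrum K ((balG (r + 1) a).adjMatrix K)) :
    ∃ ν ∈ spectrum K ((balG r a).adjMatrix K), a (r + 1) * ν = μ := by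
  rw [adjMatrix_succ_of_odd K hr] at h
  exact exists_mem_spectrum_of_submatrix card_filter_parent_eq hμ h

theorem exists_mem_spectrum_of_even (hr : Even r) {μ : K} (hμ : μ + 1 ≠ 0)
    (h : μ ∈ spectrum K ((balG (r + 1) a).adjMatrix K)) :
    ∃ ν ∈ spectrum K ((balG r a).adjMatrix K), a (r + 1) * (ν + 1) = μ + 1 := by
  rw [← add_one_mem_spectrum_add_one_iff, adjMatrix_succ_add_one_of_even K hr] at h
  obtain ⟨κ, hκ, hκμ⟩ := exists_mem_spectrum_of_submatrix card_filter_parent_eq hμ h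
  rw [← sub_add_cancel κ 1] at hκ hκμ
  exact ⟨κ - 1, add_one_mem_spectrum_add_one_iff.1 hκ, hκμ⟩

end AdjMatrix

section OrderedField

variable {K : Type*} [Field K] [LinearOrder K] [IsStrictOrderedRing K]

theorem notMem_spectrum_of_mem_Ioo (a : ℕ → ℕ) (r : ℕ) [dec : DecidableRel (balG r a).Adj] {μ : K}
    (hμ : μ ∈ Set.Ioo (-1) 0) : μ ∉ spectrum K ((balG r a).adjMatrix K) := by
  induction r generalizing μ dec with
  | zero =>
    rw [spectrum_adjMatrix_zero]
    exact hμ.2.ne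
  | succ r ih =>
    intro h
    classical
    rcases r.even_or_odd with hr | hr
    · have hμ' : μ + 1 ∈ Set.Ioo 0 1 := ⟨by linarith [hμ.1], by linarith [hμ.2]⟩
      obtain ⟨ν, hν, hνμ⟩ := exists_mem_spectrum_of_even (a := a) hr hμ'.1.ne' h
      have hν' : ν + 1 ∈ Set.Ioo 0 1 := mem_Ioo_of_natCast_mul_mem_Ioo (hνμ ▸ hμ')
      exact ih ⟨by linarith [hν'.1], by linarith [hν'.2]⟩ hν
    · obtain ⟨ν, hν, hνμ⟩ := exists_mem_spectrum_of_odd (a := a) hr hμ.2.ne h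
      have hν' : -ν ∈ Set.Ioo 0 1 := mem_Ioo_of_natCast_mul_mem_Ioo (c := a (r + 1)) <| by
        rw [mul_neg, hνμ]
        exact ⟨neg_pos.2 hμ.2, neg_lt.1 hμ.1⟩
      exact ih ⟨neg_lt.1 hν'.2, neg_pos.1 hν'.1⟩ hν

theorem neg_one_notMem_spectrum (hr : Even r) (ha : r ≠ 0 → a r ≠ 1)
    [DecidableRel (balG r a).Adj] : -1 ∉ spectrum K ((balG r a).adjMatrix K) := by
  classical
  cases r with
  | zero => simp [spectrum_adjMatrix_zero]
  | succ r =>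
    intro h
    have hr' : Odd r := Nat.not_even_iff_odd.1 (Nat.even_add_one.1 hr)
    obtain ⟨ν, hν, hνa⟩ := exists_mem_spectrum_of_odd hr' (neg_ne_zero.2 one_ne_zero) h
    have a_ne_zero : a (r + 1) ≠ 0 := by
      intro h0
      simp [h0] at hνa
    have one_lt_a : (1 : K) < a (r + 1) := by
      have := ha r.succ_ne_zero
      exact_mod_cast (by omega : 1 < a (r + 1))
    have ν_neg : ν < 0 := by nlinarith
    exact notMem_spectrum_of_mem_Ioo a r ⟨by nlinarith, ν_neg⟩ hν

theorem rank_adjMatrix_add_one_of_even (hr : Even r) (ha : r ≠ 0 → a r ≠ 1)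
    [DecidableRel (balG r a).Adj] :
    ((balG r a).adjMatrix K + 1).rank = ∏ k ∈ Icc 1 r, a k := by
  have isUnit_add_one : IsUnit ((balG r a).adjMatrix K + 1) := by
    have h := neg_one_notMem_spectrum (K := K) hr ha
    rw [← add_one_mem_spectrum_add_one_iff, neg_add_cancel, spectrum.zero_notMem_iff] at h
    exact h
  rw [Matrix.rank_of_isUnit _ isUnit_add_one, card_node]

end OrderedField

end balG

theorem multiplicity_neg_one_r_odd_general {K : Type*} [Field K] [LinearOrder K]
    [IsStrictOrderedRing K] (r : ℕ) (hr : Odd r) (a : ℕ → ℕ) (ha_last : a r ≠ 0)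
    (ha_penult : r ≠ 1 → a (r - 1) ≠ 1) [DecidableRel (balG r a).Adj] :
    Module.finrank K (LinearMap.ker (Matrix.toLin' ((balG r a).adjMatrix K + 1))) =
      (∏ k ∈ Finset.Icc 1 (r - 1), a k) * (a r - 1) := by
  classical
  obtain ⟨s, rfl⟩ := Nat.exists_eq_add_one_of_ne_zero hr.pos.ne'
  rw [Nat.add_sub_cancel] at ha_penult ⊢
  have hs : Even s := Nat.not_odd_iff_even.1 (Nat.odd_add_one.1 hr)
  have parent_surj := balG.parent_surjective ha_last
  have rank_eq : ((balG (s + 1) a).adjMatrix K + 1).rank = ∏ k ∈ Finset.Icc 1 s, a k := by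
    rw [balG.adjMatrix_succ_add_one_of_even K hs,
      rank_submatrix_of_surjective parent_surj parent_surj,
      balG.rank_adjMatrix_add_one_of_even hs fun h ↦ ha_penult (by omega)]
  rw [finrank_ker_toLin', balG.card_node, rank_eq, Finset.prod_Icc_succ_top (by omega),
    Nat.mul_sub_one]

/-- For `r ≥ 1` odd and `a_i ≥ 2`, the multiplicity of the eigenvalue `-1` of the
cograph with balanced cotree `T_G(a_1,…,a_{r-1},0|0,…,0,a_r)` is
`a_1 ⋯ a_{r-1} (a_r - 1)`. -/
theorem multiplicity_neg_one_r_odd (r : ℕ) (hr1 : 1 ≤ r) (hr : Odd r)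
    (a : ℕ → ℕ) (ha : ∀ k, 2 ≤ a k) :
    Module.finrank ℝ (LinearMap.ker (Matrix.toLin' (adjMat r a + 1))) =
      (∏ k ∈ Finset.Icc 1 (r - 1), a k) * (a r - 1) := by
  classical
  exact multiplicity_neg_one_r_odd_general r hr a (two_pos.trans_le (ha r)).ne'
    fun _ ↦ (one_lt_two.trans_le (ha (r - 1))).ne'
end

section
/- Let r ≥ 2 be even and let a_1, …, a_r be integers with a_i ≥ 2 for all i. Let A be the real adjacency matrix of the graph G(a_1,…,a_r). Then the dimension of ker(A) equals a_1·a_2·⋯·a_{r−1}·(a_r − 1); that is, the multiplicity of the eigenvalue 0 of G(a_1,…,a_r) is a_1 a_2 ⋯ a_{r−1}(a_r − 1). -/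
/-!
Let `E_j` be the 0/1 matrix recording agreement of two tuples on their first `j` coordinates. The
alternating sum `∑_{j<r} (-1)^j E_j` telescopes at the first coordinate where the tuples differ, so
it equals `A` when `r` is even and `A + I` when `r` is odd. For `k ≤ j` one has `E_k E_j = N_j E_k`,
where `N_j` is the size of the classes of `E_j`. If `f` is killed by the alternating sum and by
`E_0, …, E_{k-1}`, applying `E_k` gives `(∑_{j≥k} (-1)^j N_j) E_k f = 0`, and the scalar is nonzero
because the positive numbers `N_j` are nonincreasing and drop strictly at the last step. Hence the
kernel is that of `E_{r-1}`, whose rank is the number `a_1 ⋯ a_{r-1}` of its classes.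
-/

section LinearAlgebra

variable {K V : Type*} [Field K] [AddCommGroup V] [Module K V]

lemma ker_sum_smul_eq_ker_top {ι : Type*} [Fintype ι] [LinearOrder ι] [OrderTop ι]
    [LocallyFiniteOrder ι] {P : ι → Module.End K V} {N c : ι → K}
    (hP : ∀ k j, k ≤ j → P k * P j = N j • P k)
    (hN : ∀ k, ∑ j ∈ Finset.Ici k, c j * N j ≠ 0) :
    LinearMap.ker (∑ j, c j • P j) = LinearMap.ker (P ⊤) := by
  ext f
  simp only [LinearMap.mem_ker]
  have comp_apply (k j : ι) (hkj : k ≤ j) : P k (P j f) = N j • P k f :=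
    LinearMap.congr_fun (hP k j hkj) f
  constructor
  · intro hf
    suffices ∀ k, P k f = 0 from this ⊤
    intro k
    induction k using WellFoundedLT.induction with
    | ind k ih =>
      have tail_eq_zero : ∑ j ∈ Finset.Ici k, c j • P j f = 0 := by
        rw [← hf, LinearMap.sum_apply]
        refine Finset.sum_subset (Finset.subset_univ _) fun j _ hj => ?_
        rw [ih j (by simpa using hj), smul_zero]
      have scalar_smul : (∑ j ∈ Finset.Ici k, c j * N j) • P k f = 0 := by
        rw [← map_zero (P k), ← tail_eq_zero, map_sum, Finset.sum_smul]
        refine Finset.sum_congr rfl fun j hj => ?_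
        rw [map_smul, comp_apply k j (Finset.mem_Ici.1 hj), mul_smul]
      exact (smul_eq_zero.1 scalar_smul).resolve_left (hN k)
  · intro hf
    have hN_top : N ⊤ ≠ 0 := by
      have := hN ⊤
      rw [Finset.Ici_top, Finset.sum_singleton] at this
      exact right_ne_zero_of_mul this
    have apply_eq_zero (j : ι) : P j f = 0 := by
      have := comp_apply j ⊤ le_top
      rw [hf, map_zero] at this
      exact (smul_eq_zero.1 this.symm).resolve_left hN_top
    simp [apply_eq_zero]

lemma finrank_range_mul_eq_trace [FiniteDimensional K V] {f : Module.End K V} {c : K}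
    (hc : c ≠ 0) (hf : f * f = c • f) :
    (Module.finrank K (LinearMap.range f) : K) * c = LinearMap.trace K V f := by
  have idempotent : IsIdempotentElem (c⁻¹ • f) := by
    rw [IsIdempotentElem, smul_mul_smul_comm, hf, smul_smul, mul_assoc, inv_mul_cancel₀ hc, mul_one]
  have trace_eq := (LinearMap.IsIdempotentElem.isProj_range _ idempotent).trace
  rw [LinearMap.range_smul _ _ (inv_ne_zero hc), map_smul, smul_eq_mul] at trace_eq
  rw [← trace_eq, mul_comm, mul_inv_cancel_left₀ hc]

end LinearAlgebra

section AgreeMatrix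

variable {ι : Type*} {α : ι → Type*} [∀ i, DecidableEq (α i)]

/-- The 0/1 matrix of the equivalence relation "the tuples `u` and `v` agree on the coordinates in
`S`"; the matrix `E_j` of the argument is the case `S = Iio j`. -/
def agreeMatrix (R : Type*) [Zero R] [One R] (S : Finset ι) :
    Matrix (∀ i, α i) (∀ i, α i) R :=
  Matrix.of fun u v => if ∀ i ∈ S, u i = v i then 1 else 0

lemma agreeMatrix_apply (R : Type*) [Zero R] [One R] (S : Finset ι) (u v : ∀ i, α i) :
    agreeMatrix R S u v = if ∀ i ∈ S, u i = v i then 1 else 0 :=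
  rfl

variable [Fintype ι] [DecidableEq ι] [∀ i, Fintype (α i)]

lemma card_filter_forall_mem_eq (S : Finset ι) (v : ∀ i, α i) :
    Finset.card {u : ∀ i, α i | ∀ i ∈ S, u i = v i} = ∏ i ∈ Sᶜ, Fintype.card (α i) := by
  have eq_piFinset : ({u : ∀ i, α i | ∀ i ∈ S, u i = v i} : Finset _) =
      Fintype.piFinset fun i => if i ∈ S then {v i} else Finset.univ := by
    ext u
    simp only [Finset.mem_filter_univ, Fintype.mem_piFinset]
    refine forall_congr' fun i => ?_
    split_ifs with hi <;> simp [hi]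
  rw [eq_piFinset, Fintype.card_piFinset, ← Finset.prod_mul_prod_compl S,
    Finset.prod_eq_one fun i hi => by simp [hi], one_mul]
  exact Finset.prod_congr rfl fun i hi => by simp [Finset.mem_compl.1 hi]

lemma agreeMatrix_mul_agreeMatrix (R : Type*) [CommSemiring R] {S T : Finset ι} (hST : S ⊆ T) :
    agreeMatrix (α := α) R S * agreeMatrix R T =
      ((∏ i ∈ Tᶜ, Fintype.card (α i) : ℕ) : R) • agreeMatrix R S := by
  ext w v
  have summand_eq (u : ∀ i, α i) : agreeMatrix R S w u * agreeMatrix R T u v =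
      (if ∀ i ∈ T, u i = v i then 1 else 0) * agreeMatrix R S w v := by
    simp only [agreeMatrix_apply]
    by_cases huv : ∀ i ∈ T, u i = v i
    · have agree_iff : (∀ i ∈ S, w i = u i) ↔ ∀ i ∈ S, w i = v i :=
        forall₂_congr fun i hi => by rw [huv i (hST hi)]
      simp only [if_pos huv, mul_one, one_mul]
      congr 1
      exact propext agree_iff
    · simp only [if_neg huv, mul_zero, zero_mul]
  rw [Matrix.mul_apply, Finset.sum_congr rfl fun u _ => summand_eq u, ← Finset.sum_mul,
    Finset.sum_boole, card_filter_forall_mem_eq, Matrix.smul_apply, smul_eq_mul]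

lemma trace_agreeMatrix (R : Type*) [Semiring R] (S : Finset ι) :
    (agreeMatrix (α := α) R S).trace = Fintype.card (∀ i, α i) := by
  simp [Matrix.trace, agreeMatrix_apply]

lemma rank_agreeMatrix (K : Type*) [Field K] [CharZero K] [∀ i, Nonempty (α i)] (S : Finset ι) :
    (agreeMatrix (α := α) K S).rank = ∏ i ∈ S, Fintype.card (α i) := by
  have compl_pos : 0 < ∏ i ∈ Sᶜ, Fintype.card (α i) := Finset.prod_pos fun i _ => Fintype.card_pos
  have mul_self : Matrix.toLin' (agreeMatrix (α := α) K S) * Matrix.toLin' (agreeMatrix K S) =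
      ((∏ i ∈ Sᶜ, Fintype.card (α i) : ℕ) : K) • Matrix.toLin' (agreeMatrix K S) := by
    rw [Module.End.mul_eq_comp, ← Matrix.toLin'_mul,
      agreeMatrix_mul_agreeMatrix K subset_rfl, map_smul]
  have rank_mul := finrank_range_mul_eq_trace (Nat.cast_ne_zero.2 compl_pos.ne') mul_self
  rw [Matrix.trace_toLin'_eq, trace_agreeMatrix, Fintype.card_pi,
    ← Finset.prod_mul_prod_compl S] at rank_mul
  exact Nat.eq_of_mul_eq_mul_right compl_pos (by exact_mod_cast rank_mul)

lemma finrank_ker_agreeMatrix (K : Type*) [Field K] [CharZero K] [∀ i, Nonempty (α i)]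
    (S : Finset ι) :
    Module.finrank K (LinearMap.ker (Matrix.toLin' (agreeMatrix (α := α) K S))) =
      (∏ i ∈ S, Fintype.card (α i)) * (∏ i ∈ Sᶜ, Fintype.card (α i) - 1) := by
  have rank_nullity :=
    LinearMap.finrank_range_add_finrank_ker (Matrix.toLin' (agreeMatrix (α := α) K S))
  rw [Matrix.toLin'_apply', ← Matrix.rank, rank_agreeMatrix, Module.finrank_fintype_fun_eq_card,
    Fintype.card_pi, ← Finset.prod_mul_prod_compl S] at rank_nullity
  rw [Matrix.toLin'_apply', Nat.mul_sub_one, ← rank_nullity, Nat.add_sub_cancel_left]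

end AgreeMatrix

section Signs

lemma alternating_sum_Ici_pos {R : Type*} [CommRing R] [LinearOrder R] [IsStrictOrderedRing R]
    {n : ℕ} {N : Fin (n + 1) → R} (hN : Antitone N) (hlast : 0 < N (Fin.last n))
    (hlt : ∀ i < Fin.last n, N (Fin.last n) < N i) (k : Fin (n + 1)) :
    0 < (-1) ^ (k : ℕ) * ∑ j ∈ Finset.Ici k, (-1) ^ (j : ℕ) * N j := by
  have sign_mul_sign (i : ℕ) (x : R) : (-1) ^ i * ((-1) ^ i * x) = x := by
    rw [← mul_assoc, ← mul_pow, neg_one_mul, neg_neg, one_pow, one_mul]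
  -- Bounding by every earlier `N i` carries the induction through repeated values of `N`.
  suffices 0 < (-1) ^ (k : ℕ) * ∑ j ∈ Finset.Ici k, (-1) ^ (j : ℕ) * N j ∧
      ∀ i < k, (-1) ^ (k : ℕ) * ∑ j ∈ Finset.Ici k, (-1) ^ (j : ℕ) * N j < N i from this.1
  induction k using Fin.reverseInduction with
  | last =>
    rw [← Fin.top_eq_last, Finset.Ici_top, Finset.sum_singleton, sign_mul_sign, Fin.top_eq_last]
    exact ⟨hlast, hlt⟩
  | cast k ih =>
    obtain ⟨tail_pos, tail_lt⟩ := ih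
    have peel : (-1) ^ (k : ℕ) * ∑ j ∈ Finset.Ici k.castSucc, (-1) ^ (j : ℕ) * N j =
        N k.castSucc - (-1) ^ (k + 1 : ℕ) * ∑ j ∈ Finset.Ici k.succ, (-1) ^ (j : ℕ) * N j := by
      have Ici_succ : Finset.Ici k.succ = Finset.Ioi k.castSucc := by
        ext j
        simp [Fin.castSucc_lt_iff_succ_le]
      rw [Ici_succ, ← Finset.Ioi_insert, Finset.sum_insert (by simp), mul_add,
        Fin.val_castSucc, sign_mul_sign]
      ring
    rw [Fin.val_succ] at tail_pos tail_lt
    rw [Fin.val_castSucc, peel]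
    refine ⟨sub_pos.2 (tail_lt _ k.castSucc_lt_succ), fun i hi => ?_⟩
    exact (sub_lt_self _ tail_pos).trans_le (hN hi.le)

lemma alternating_sum_prod_Ici_ne_zero (R : Type*) [CommRing R] [LinearOrder R]
    [IsStrictOrderedRing R] {n : ℕ} {b : Fin (n + 1) → ℕ} (hpos : ∀ i, 1 ≤ b i)
    (hpenult : ∀ i : Fin (n + 1), (i : ℕ) + 1 = n → 2 ≤ b i) (k : Fin (n + 1)) :
    ∑ j ∈ Finset.Ici k, (-1 : R) ^ (j : ℕ) * ((∏ i ∈ Finset.Ici j, b i : ℕ) : R) ≠ 0 := by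
  have prod_mono {s t : Finset (Fin (n + 1))} (hst : s ⊆ t) : ∏ i ∈ s, b i ≤ ∏ i ∈ t, b i :=
    Finset.prod_le_prod_of_subset_of_one_le' hst fun i _ _ => hpos i
  have antitone : Antitone fun j => ((∏ i ∈ Finset.Ici j, b i : ℕ) : R) := fun i j hij =>
    Nat.cast_le.2 (prod_mono (Finset.Ici_subset_Ici.2 hij))
  have Ici_last : Finset.Ici (Fin.last n) = {Fin.last n} := Finset.Ici_top
  have last_lt (i : Fin (n + 1)) (hi : i < Fin.last n) :
      ∏ j ∈ Finset.Ici (Fin.last n), b j < ∏ j ∈ Finset.Ici i, b j := by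
    have hin : (i : ℕ) < n := hi
    let p : Fin (n + 1) := ⟨n - 1, by omega⟩
    have hp : (p : ℕ) = n - 1 := rfl
    have p_ne_last : p ≠ Fin.last n := by simp only [ne_eq, Fin.ext_iff, Fin.val_last]; omega
    have pair_subset : {p, Fin.last n} ⊆ Finset.Ici i := by
      simp only [Finset.insert_subset_iff, Finset.singleton_subset_iff, Finset.mem_Ici]
      exact ⟨Fin.le_def.2 (by omega), hi.le⟩
    calc ∏ j ∈ Finset.Ici (Fin.last n), b j = b (Fin.last n) := by
          rw [Ici_last, Finset.prod_singleton]
      _ < b p * b (Fin.last n) := lt_mul_of_one_lt_left (hpos _) (hpenult p (by omega))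
      _ = ∏ j ∈ {p, Fin.last n}, b j := (Finset.prod_pair p_ne_last).symm
      _ ≤ ∏ j ∈ Finset.Ici i, b j := prod_mono pair_subset
  refine right_ne_zero_of_mul (alternating_sum_Ici_pos antitone ?_ ?_ k).ne'
  · exact Nat.cast_pos.2 (Finset.prod_pos fun i _ => hpos i)
  · exact fun i hi => Nat.cast_lt.2 (last_lt i hi)

lemma sum_Iic_neg_one_pow (R : Type*) [Ring R] {r : ℕ} (m : Fin r) :
    ∑ j ∈ Finset.Iic m, (-1 : R) ^ (j : ℕ) = if Even (m : ℕ) then 1 else 0 := by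
  have sum_range : ∑ j ∈ Finset.Iic m, (-1 : R) ^ (j : ℕ) =
      ∑ j ∈ Finset.range (m + 1), (-1 : R) ^ j := by
    rw [Nat.range_succ_eq_Iic, ← Fin.map_valEmbedding_Iic, Finset.sum_map]
    rfl
  simp only [sum_range, neg_one_geom_sum, Nat.even_add_one, ite_not]

end Signs

section FirstDifference

variable {r : ℕ}

lemma exists_first_ne {α : Fin r → Type*} {u v : ∀ i, α i} (huv : u ≠ v) :
    ∃ m, u m ≠ v m ∧ ∀ j < m, u j = v j := by
  obtain ⟨m, hm, hmin⟩ := wellFounded_lt.has_min {i | u i ≠ v i} (Function.ne_iff.1 huv)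
  exact ⟨m, hm, fun j hj => by_contra fun hne => hmin j hne hj⟩

lemma forall_mem_Iio_eq_iff_le {α : Fin r → Type*} {u v : ∀ i, α i} {m : Fin r}
    (hne : u m ≠ v m) (heq : ∀ j < m, u j = v j) (j : Fin r) :
    (∀ i ∈ Finset.Iio j, u i = v i) ↔ j ≤ m := by
  refine ⟨fun h => not_lt.1 fun hmj => hne (h m (Finset.mem_Iio.2 hmj)), fun hjm i hi => ?_⟩
  exact heq i ((Finset.mem_Iio.1 hi).trans_le hjm)

variable {a : ℕ → ℕ} {u v : (i : Fin r) → Fin (a ((i : ℕ) + 1))}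

lemma balG_adj_iff_even {m : Fin r} (hne : u m ≠ v m) (heq : ∀ j < m, u j = v j) :
    (balG r a).Adj u v ↔ Even (m : ℕ) := by
  have first_unique (i : Fin r) (hi : u i ≠ v i) (hlt : ∀ j < i, u j = v j) : i = m :=
    le_antisymm (not_lt.1 fun h => hne (hlt m h)) (not_lt.1 fun h => hi (heq i h))
  simp only [balG, SimpleGraph.fromRel_adj]
  constructor
  · rintro ⟨-, ⟨i, hi, heven, hlt⟩ | ⟨i, hi, heven, hlt⟩⟩
    · exact first_unique i hi hlt ▸ heven
    · exact first_unique i hi.symm (fun j hj => (hlt j hj).symm) ▸ heven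
  · intro heven
    exact ⟨fun h => hne (congrFun h m), Or.inl ⟨m, hne, heven, heq⟩⟩

end FirstDifference

section BalancedCograph

lemma compl_Iio_eq_Ici {ι : Type*} [Fintype ι] [LinearOrder ι] [LocallyFiniteOrderTop ι]
    [LocallyFiniteOrderBot ι] (j : ι) : (Finset.Iio j)ᶜ = Finset.Ici j := by
  ext i
  simp only [Finset.mem_compl, Finset.mem_Iio, not_lt, Finset.mem_Ici]

lemma adjMat_sub_smul_one_eq_sum (r : ℕ) (a : ℕ → ℕ) :
    adjMat r a - (if Even r then 0 else -1 : ℝ) • 1 =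
      ∑ j : Fin r, (-1 : ℝ) ^ (j : ℕ) • agreeMatrix ℝ (Finset.Iio j) := by
  ext u v
  simp only [Matrix.sub_apply, Matrix.smul_apply, Matrix.sum_apply, smul_eq_mul, agreeMatrix_apply]
  obtain rfl | huv := eq_or_ne u v
  · have sum_signs : ∑ j : Fin r, (-1 : ℝ) ^ (j : ℕ) = if Even r then 0 else 1 := by
      rw [Fin.sum_univ_eq_sum_range (fun j => (-1 : ℝ) ^ j), neg_one_geom_sum]
    simp only [implies_true, if_true, mul_one, sum_signs, Matrix.one_apply_eq]
    split_ifs <;> simp [adjMat]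
  · obtain ⟨m, hne, heq⟩ := exists_first_ne huv
    simp only [forall_mem_Iio_eq_iff_le hne heq, mul_ite, mul_one, mul_zero,
      Matrix.one_apply_ne huv, sub_zero, ← Finset.sum_filter, Finset.filter_ge_eq_Iic,
      sum_Iic_neg_one_pow, adjMat, Matrix.of_apply, balG_adj_iff_even hne heq]

lemma eigenspace_adjMat_eq_ker (n : ℕ) {a : ℕ → ℕ} (hpos : ∀ k ∈ Finset.Icc 1 (n + 1), 1 ≤ a k)
    (hpenult : 1 ≤ n → 2 ≤ a n) :
    Module.End.eigenspace (Matrix.toLin' (adjMat (n + 1) a)) (if Even (n + 1) then 0 else -1) =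
      LinearMap.ker (Matrix.toLin' (agreeMatrix ℝ (Finset.Iio (Fin.last n)))) := by
  rw [Module.End.eigenspace_def, Module.End.one_eq_id, ← Matrix.toLin'_one, ← map_smul, ← map_sub,
    adjMat_sub_smul_one_eq_sum, map_sum]
  simp only [map_smul]
  refine ker_sum_smul_eq_ker_top
    (P := fun j : Fin (n + 1) => Matrix.toLin' (agreeMatrix ℝ (Finset.Iio j)))
    (N := fun j => ((∏ i ∈ Finset.Ici j, a ((i : ℕ) + 1) : ℕ) : ℝ)) (fun k j hkj => ?_)
    (alternating_sum_prod_Ici_ne_zero ℝ (fun i => hpos _ (by simp; omega)) fun i hi => ?_)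
  · rw [Module.End.mul_eq_comp, ← Matrix.toLin'_mul,
      agreeMatrix_mul_agreeMatrix ℝ (Finset.Iio_subset_Iio hkj), map_smul, compl_Iio_eq_Ici]
    simp only [Fintype.card_fin]
  · rw [hi]
    exact hpenult (by omega)

end BalancedCograph

theorem multiplicity_zero_r_even_general (r : ℕ) (hr : 1 ≤ r) (a : ℕ → ℕ)
    (hpos : ∀ k ∈ Finset.Icc 1 r, 1 ≤ a k) (hpenult : 2 ≤ r → 2 ≤ a (r - 1)) :
    Module.finrank ℝ
        (Module.End.eigenspace (Matrix.toLin' (adjMat r a)) (if Even r then 0 else -1)) =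
      (∏ k ∈ Finset.Icc 1 (r - 1), a k) * (a r - 1) := by
  obtain ⟨n, rfl⟩ : ∃ n, r = n + 1 := ⟨r - 1, by omega⟩
  have nonempty (i : Fin (n + 1)) : Nonempty (Fin (a ((i : ℕ) + 1))) :=
    Fin.pos_iff_nonempty.1 (hpos _ (by simp; omega))
  have compl_Iio_last : (Finset.Iio (Fin.last n))ᶜ = {Fin.last n} := by
    rw [compl_Iio_eq_Ici, ← Fin.top_eq_last, Finset.Ici_top]
  have prod_Icc : ∏ k ∈ Finset.Icc 1 n, a k = ∏ i : Fin n, a ((i : ℕ) + 1) := by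
    rw [Fin.prod_univ_eq_prod_range (fun i => a (i + 1)), Finset.range_eq_Ico,
      Finset.prod_Ico_add' a 0 n 1, zero_add, Finset.Ico_add_one_right_eq_Icc]
  rw [eigenspace_adjMat_eq_ker n hpos (fun hn => hpenult (by omega)), finrank_ker_agreeMatrix,
    compl_Iio_last]
  simp [Fin.Iio_last_eq_map, prod_Icc]

/-- For `r ≥ 2` even and `a_i ≥ 2`, the multiplicity of the eigenvalue `0` of the
cograph with balanced cotree `T_G(a_1,…,a_{r-1},0|0,…,0,a_r)` is
`a_1 ⋯ a_{r-1} (a_r - 1)`. -/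
theorem multiplicity_zero_r_even (r : ℕ) (hr1 : 2 ≤ r) (hr : Even r)
    (a : ℕ → ℕ) (ha : ∀ k, 2 ≤ a k) :
    Module.finrank ℝ (LinearMap.ker (Matrix.toLin' (adjMat r a))) =
      (∏ k ∈ Finset.Icc 1 (r - 1), a k) * (a r - 1) := by
  have multiplicity :=
    multiplicity_zero_r_even_general r (by omega) a (fun k _ => one_le_two.trans (ha k))
      fun _ => ha (r - 1)
  rwa [if_pos hr, Module.End.eigenspace_zero] at multiplicity
end

section
/- Let t and p be integers with t > p ≥ 1 and t ≥ 2, and let G be the cograph ((tK_1 ⊗ tK_1)) ⊗ K_p on 2t + p vertices, and let A be its real adjacency matrix. Then the dimension of ker(A) equals 2t − 2 and the dimension of ker(A + I) equals p − 1; that is, m(0, G) = 2t − 2 and m(−1, G) = p − 1. -/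
/-- The part of a vertex of `(t K_1 ⊗ t K_1) ⊗ K_p`: `0` for the first independent set
`U_1`, `1` for the second independent set `U_2`, `2` for the clique `W`. -/
def part {t p : ℕ} : (Fin t ⊕ Fin t) ⊕ Fin p → ℕ
  | Sum.inl (Sum.inl _) => 0
  | Sum.inl (Sum.inr _) => 1
  | Sum.inr _ => 2

/-- The cograph `(t K_1 ⊗ t K_1) ⊗ K_p` on `2t + p` vertices: two distinct vertices are
adjacent iff they lie in different parts, or both lie in the clique `W` (part `2`). -/
def joinGraph (t p : ℕ) : SimpleGraph ((Fin t ⊕ Fin t) ⊕ Fin p) :=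
  SimpleGraph.fromRel (fun u v => part u ≠ part v ∨ part u = 2)

open scoped Classical in
/-- The real adjacency matrix of `joinGraph t p`. -/
noncomputable def adjJ (t p : ℕ) :
    Matrix ((Fin t ⊕ Fin t) ⊕ Fin p) ((Fin t ⊕ Fin t) ⊕ Fin p) ℝ :=
  Matrix.of fun u v => if (joinGraph t p).Adj u v then 1 else 0

/-!
The graph `(t K_1 ⊗ t K_1) ⊗ K_p` is complete multipartite: its parts are `U_1`, `U_2` and the
`p` singletons of `W`. In a complete multipartite graph, the neighbours of a vertex are the vertices
outside its part, so `(A x) v = S - s`, where `S` is the total sum of `x` and `s` is the sum of `x`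
over the part of `v`.

* `A x = 0` says that every part sum equals `S`. Adding the `k` part sums gives `S = k S`, so
  `S = 0` when `k ≠ 1`, and the kernel is cut out by the `k` independent equations `s = 0`.
* `A x = -x` says `x v = s - S`. At a singleton part this forces `S = 0`, and then `x v = s`, so
  that a part of size `n` satisfies `s = n s`. Hence `x` vanishes on the parts with at least two
  vertices, and the eigenspace consists of the sum-zero functions supported on the singleton parts.
-/

open Finset

section Pushforward

theorem funOnFinite_linearMap_surjective {V ι : Type*} (R M : Type*) [Semiring R] [AddCommMonoid M]
    [Module R M] [Finite V] [Finite ι] {f : V → ι} (hf : Function.Surjective f) :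
    Function.Surjective (FunOnFinite.linearMap R M f) :=
  ((Finsupp.linearEquivFunOnFinite R M ι).surjective.comp (Finsupp.mapDomain_surjective hf)).comp
    (Finsupp.linearEquivFunOnFinite R M V).symm.surjective

theorem finrank_ker_funOnFinite_linearMap_of_surjective {V ι K : Type*} [DivisionRing K]
    [Fintype V] [Fintype ι] {f : V → ι} (hf : Function.Surjective f) :
    Module.finrank K (LinearMap.ker (FunOnFinite.linearMap K K f)) =
      Fintype.card V - Fintype.card ι := by
  have rank_nullity := (FunOnFinite.linearMap K K f).finrank_range_add_finrank_ker
  rw [LinearMap.range_eq_top.2 (funOnFinite_linearMap_surjective K K hf), finrank_top,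
    Module.finrank_fintype_fun_eq_card, Module.finrank_fintype_fun_eq_card] at rank_nullity
  omega

open scoped Classical in
/-- The map contracting `s` to the single point `none` and fixing every other element. Pushing a
function forward along it records its values off `s` together with its sum over `s`. -/
noncomputable def collapse {V : Type*} (s : Set V) (v : V) : Option ↥sᶜ :=
  if h : v ∈ s then none else some ⟨v, h⟩

theorem collapse_surjective {V : Type*} {s : Set V} (hs : s.Nonempty) :
    Function.Surjective (collapse s) := by
  rintro (_ | ⟨v, hv⟩)
  · exact hs.imp fun v hv => dif_pos hv
  · exact ⟨v, dif_neg hv⟩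

theorem mem_ker_funOnFinite_linearMap_collapse_iff {V R : Type*} [Fintype V] [Semiring R]
    {s : Set V} {x : V → R} :
    x ∈ LinearMap.ker (FunOnFinite.linearMap R R (collapse s)) ↔
      (∀ v ∉ s, x v = 0) ∧ ∑ v, x v = 0 := by
  classical
  have collapse_eq_none (v : V) : collapse s v = none ↔ v ∈ s := by simp [collapse]
  have collapse_eq_some (v : V) (w : ↥sᶜ) : collapse s v = some w ↔ v = w := by
    have := w.2
    unfold collapse
    split_ifs <;> grind
  have sum_fiber_some (w : ↥sᶜ) : ∑ v with collapse s v = some w, x v = x w := by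
    simp [collapse_eq_some, sum_filter]
  have sum_on (hx : ∀ v ∉ s, x v = 0) : ∑ v with v ∈ s, x v = ∑ v, x v :=
    sum_filter_of_ne fun v _ hv => not_imp_comm.1 (hx v) hv
  simp only [LinearMap.mem_ker, funext_iff, FunOnFinite.linearMap_apply_apply, Option.forall,
    collapse_eq_none, sum_fiber_some, Pi.zero_apply, Subtype.forall, Set.mem_compl_iff]
  rw [and_comm]
  exact and_congr_right fun hx => by rw [sum_on hx]

end Pushforward

section Kernels

/-- The complete multipartite graph on `V` whose parts are the nonempty fibres of `f`. Unlike
`SimpleGraph.completeMultipartiteGraph`, it lives on a given vertex type, not on a sigma type. -/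
abbrev fiberMultipartiteGraph {V ι : Type*} (f : V → ι) : SimpleGraph V :=
  (⊤ : SimpleGraph ι).comap f

/-- The vertices that are alone in their fibre under `f`, that is, the union of the singleton parts
of `fiberMultipartiteGraph f`. -/
def singletonFibers {V ι : Type*} (f : V → ι) : Set V :=
  {v | ∀ u, f u = f v → u = v}

variable {V ι R : Type*} [Fintype V] [DecidableEq ι]

theorem fiberMultipartiteGraph_adjMatrix_mulVec_apply [NonAssocRing R] (f : V → ι) (x : V → R)
    (v : V) :
    ((fiberMultipartiteGraph f).adjMatrix R).mulVec x v = ∑ u, x u - ∑ u with f u = f v, x u := by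
  rw [SimpleGraph.adjMatrix_mulVec_apply, SimpleGraph.neighborFinset_eq_filter, eq_sub_iff_add_eq',
    ← sum_filter_add_sum_filter_not univ (fun u => f u = f v)]
  simp [eq_comm]

theorem eq_zero_of_forall_eq_sum_fiber [Ring R] [NoZeroDivisors R] [CharZero R] {f : V → ι}
    {x : V → R} (hx : ∀ v, x v = ∑ u with f u = f v, x u) {v : V} (hv : v ∉ singletonFibers f) :
    x v = 0 := by
  obtain ⟨u, huv, hne⟩ : ∃ u, f u = f v ∧ u ≠ v := by simpa [singletonFibers] using hv
  have const_on_fiber : ∀ w ∈ univ.filter (f · = f v), x w = x v := fun w hw => by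
    rw [hx w, hx v, (mem_filter.1 hw).2]
  have card_ne_one : #{w | f w = f v} ≠ 1 :=
    (one_lt_card.2 ⟨u, by simpa using huv, v, by simp, hne⟩).ne'
  have eq_card_mul : x v = #{w | f w = f v} * x v := by
    conv_lhs => rw [hx v, sum_congr rfl const_on_fiber, sum_const, nsmul_eq_mul]
  by_contra h
  exact card_ne_one (by exact_mod_cast (mul_eq_right₀ h).1 eq_card_mul.symm)

variable [DecidableEq V] [CommRing R] [NoZeroDivisors R]

theorem ker_adjMatrix_fiberMultipartiteGraph [Fintype ι] {f : V → ι}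
    (hf : Function.Surjective f) (hι : (Fintype.card ι : R) ≠ 1) :
    LinearMap.ker (Matrix.toLin' ((fiberMultipartiteGraph f).adjMatrix R)) =
      LinearMap.ker (FunOnFinite.linearMap R R f) := by
  ext x
  simp only [LinearMap.mem_ker, Matrix.toLin'_apply, funext_iff, Pi.zero_apply,
    fiberMultipartiteGraph_adjMatrix_mulVec_apply, FunOnFinite.linearMap_apply_apply,
    ← hf.forall (p := fun i => ∑ u, x u - ∑ u with f u = i, x u = 0)]
  have total_eq : ∑ i, ∑ u with f u = i, x u = ∑ u, x u := sum_fiberwise univ f x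
  constructor
  · intro h i
    have part_eq (i : ι) : ∑ u with f u = i, x u = ∑ u, x u := (sub_eq_zero.1 (h i)).symm
    have card_mul : (Fintype.card ι - 1 : R) * ∑ u, x u = 0 := by
      rw [sub_one_mul, sub_eq_zero]
      simpa [part_eq] using total_eq
    rw [part_eq, (mul_eq_zero.1 card_mul).resolve_left (sub_ne_zero.2 hι)]
  · intro h i
    rw [← total_eq, sum_eq_zero fun i _ => h i, h i, sub_zero]

theorem ker_adjMatrix_add_one_fiberMultipartiteGraph [CharZero R] {f : V → ι}
    (hf : (singletonFibers f).Nonempty) :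
    LinearMap.ker (Matrix.toLin' ((fiberMultipartiteGraph f).adjMatrix R + 1)) =
      LinearMap.ker (FunOnFinite.linearMap R R (collapse (singletonFibers f))) := by
  ext x
  have sum_fiber_of_mem {v : V} (hv : v ∈ singletonFibers f) :
      ∑ u with f u = f v, x u = x v := by
    rw [sum_eq_single_of_mem v (by simp) fun u hu hne => absurd (hv u (mem_filter.1 hu).2) hne]
  rw [mem_ker_funOnFinite_linearMap_collapse_iff]
  simp only [LinearMap.mem_ker, Matrix.toLin'_apply, funext_iff, Pi.zero_apply, Matrix.add_mulVec,
    Matrix.one_mulVec, Pi.add_apply, fiberMultipartiteGraph_adjMatrix_mulVec_apply]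
  constructor
  · intro h
    obtain ⟨w, hw⟩ := hf
    have total_eq_zero : ∑ u, x u = 0 := by simpa [sum_fiber_of_mem hw] using h w
    refine ⟨fun v => eq_zero_of_forall_eq_sum_fiber fun v => ?_, total_eq_zero⟩
    linear_combination h v - total_eq_zero
  · rintro ⟨hx, total_eq_zero⟩ v
    suffices ∑ u with f u = f v, x u = x v by rw [total_eq_zero, this, zero_sub, neg_add_cancel]
    by_cases hv : v ∈ singletonFibers f
    · exact sum_fiber_of_mem hv
    · rw [hx v hv]
      refine sum_eq_zero fun u hu => hx u fun hmem => hv ?_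
      have huv := (mem_filter.1 hu).2
      rwa [hmem v huv.symm]

end Kernels

section Dimensions

variable {V ι K : Type*} [Fintype V] [DecidableEq V] [DecidableEq ι] [Field K]

theorem finrank_ker_adjMatrix_fiberMultipartiteGraph [Fintype ι] {f : V → ι}
    (hf : Function.Surjective f) (hι : (Fintype.card ι : K) ≠ 1) :
    Module.finrank K (LinearMap.ker (Matrix.toLin' ((fiberMultipartiteGraph f).adjMatrix K))) =
      Fintype.card V - Fintype.card ι := by
  rw [ker_adjMatrix_fiberMultipartiteGraph hf hι,
    finrank_ker_funOnFinite_linearMap_of_surjective hf]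

theorem finrank_ker_adjMatrix_add_one_fiberMultipartiteGraph [CharZero K] {f : V → ι}
    (hf : (singletonFibers f).Nonempty) :
    Module.finrank K
        (LinearMap.ker (Matrix.toLin' ((fiberMultipartiteGraph f).adjMatrix K + 1))) =
      (singletonFibers f).ncard - 1 := by
  classical
  rw [ker_adjMatrix_add_one_fiberMultipartiteGraph hf,
    finrank_ker_funOnFinite_linearMap_of_surjective (collapse_surjective hf), Fintype.card_option,
    ← Nat.card_eq_fintype_card, ← Nat.card_eq_fintype_card, Nat.card_coe_set_eq,
    ← Set.ncard_add_ncard_compl (singletonFibers f)]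
  omega

end Dimensions

section JoinGraph

/-- The map onto the parts of `joinGraph t p` as a complete multipartite graph: `U_1` and `U_2` are
contracted to one point each, and every vertex of `W` is a part of its own. -/
def joinPart (t p : ℕ) : (Fin t ⊕ Fin t) ⊕ Fin p → (Unit ⊕ Unit) ⊕ Fin p :=
  Sum.map (Sum.map (fun _ => ()) (fun _ => ())) id

theorem joinGraph_eq_fiberMultipartiteGraph (t p : ℕ) :
    joinGraph t p = fiberMultipartiteGraph (joinPart t p) := by
  ext ((i | i) | i) ((j | j) | j) <;> simp [joinGraph, part, joinPart]

theorem adjJ_eq_adjMatrix (t p : ℕ) :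
    adjJ t p = (fiberMultipartiteGraph (joinPart t p)).adjMatrix ℝ := by
  ext u v
  simp only [adjJ, Matrix.of_apply, joinGraph_eq_fiberMultipartiteGraph,
    SimpleGraph.adjMatrix_apply]

theorem joinPart_surjective {t : ℕ} (ht : t ≠ 0) (p : ℕ) : Function.Surjective (joinPart t p) := by
  have : NeZero t := ⟨ht⟩
  have const_surjective : Function.Surjective fun _ : Fin t => () := fun _ => ⟨0, rfl⟩
  exact (const_surjective.sumMap const_surjective).sumMap Function.surjective_id

theorem singletonFibers_joinPart {t : ℕ} (ht : 2 ≤ t) (p : ℕ) :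
    singletonFibers (joinPart t p) = Set.range Sum.inr := by
  have : Nontrivial (Fin t) := Fin.nontrivial_iff_two_le.2 ht
  ext ((i | i) | i)
  · simpa [singletonFibers, joinPart] using exists_ne i
  · simpa [singletonFibers, joinPart] using exists_ne i
  · simp [singletonFibers, joinPart]

theorem joinGraph_multiplicities_general (t p : ℕ) (ht : 2 ≤ t) (hp : 1 ≤ p) :
    Module.finrank ℝ (LinearMap.ker (Matrix.toLin' (adjJ t p))) = 2 * t - 2 ∧
    Module.finrank ℝ (LinearMap.ker (Matrix.toLin' (adjJ t p + 1))) = p - 1 := by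
  rw [adjJ_eq_adjMatrix]
  constructor
  · have card_parts_ne_one : (Fintype.card ((Unit ⊕ Unit) ⊕ Fin p) : ℝ) ≠ 1 := by
      rw [Nat.cast_ne_one, Fintype.card_sum, Fintype.card_sum, Fintype.card_unit]
      omega
    rw [finrank_ker_adjMatrix_fiberMultipartiteGraph (joinPart_surjective (by omega) p)
      card_parts_ne_one]
    simp only [Fintype.card_sum, Fintype.card_fin, Fintype.card_unit]
    omega
  · have singletons := singletonFibers_joinPart ht p
    have : Nonempty (Fin p) := ⟨⟨0, hp⟩⟩
    rw [finrank_ker_adjMatrix_add_one_fiberMultipartiteGraph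
      (singletons ▸ Set.range_nonempty Sum.inr), singletons,
      Set.ncard_range_of_injective Sum.inr_injective, Nat.card_fin]

end JoinGraph

/-- For `t > p ≥ 1` and `t ≥ 2`, the cograph `G = (t K_1 ⊗ t K_1) ⊗ K_p` satisfies
`m(0, G) = 2t - 2` and `m(-1, G) = p - 1`. -/
theorem joinGraph_multiplicities (t p : ℕ) (ht : 2 ≤ t) (hp : 1 ≤ p) (htp : p < t) :
    Module.finrank ℝ (LinearMap.ker (Matrix.toLin' (adjJ t p))) = 2 * t - 2 ∧
    Module.finrank ℝ (LinearMap.ker (Matrix.toLin' (adjJ t p + 1))) = p - 1 :=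
  joinGraph_multiplicities_general t p ht hp
end

section
/- Let t and p be integers with t > p ≥ 1 and t ≥ 2, and let G be the cograph ((tK_1 ⊗ tK_1)) ⊗ K_p on 2t + p vertices, with real adjacency matrix A. Then every eigenvalue μ of A satisfies −t ≤ μ ≤ t(p+1); that is, the smallest eigenvalue of G is at least −t and the largest eigenvalue of G is at most t(p+1). -/
/-!
The graph is complete multipartite: its classes are the two independent sets, of size `t`, and the
`p` singletons of the clique. Let `s` be the vector of the sums of `x` over the `p + 2` classes.
Then `xᵀ A x = (∑ i, s i) ^ 2 - ∑ i, (s i) ^ 2`, which by Cauchy-Schwarz lies between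
`-∑ i, (s i) ^ 2` and `(p + 1) * ∑ i, (s i) ^ 2`. By Cauchy-Schwarz within each class,
`∑ i, (s i) ^ 2 ≤ t * xᵀ x`, so the Rayleigh quotient of `A` lies between `-t` and `t * (p + 1)`.
-/

open Matrix Module.End

section FiberSum

variable {V W ι κ R : Type*} [Fintype V] [Fintype W] [DecidableEq ι] [DecidableEq κ]

/-- The vector of the sums of `x` over the fibers of `f`, that is, the transpose of the pullback
`z ↦ z ∘ f` applied to `x`. -/
def fiberSum [AddCommMonoid R] (f : V → ι) (x : V → R) (i : ι) : R :=
  ∑ v with f v = i, x v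

lemma comp_dotProduct_eq_dotProduct_fiberSum [NonUnitalNonAssocSemiring R] [Fintype ι]
    (f : V → ι) (z : ι → R) (x : V → R) : (z ∘ f) ⬝ᵥ x = z ⬝ᵥ fiberSum f x := by
  calc ∑ v, z (f v) * x v = ∑ i, ∑ v with f v = i, z (f v) * x v :=
        (Finset.sum_fiberwise _ f _).symm
    _ = ∑ i, z i * fiberSum f x i := by
        refine Finset.sum_congr rfl fun i _ ↦ ?_
        rw [fiberSum, Finset.mul_sum]
        exact Finset.sum_congr rfl fun v hv ↦ by rw [(Finset.mem_filter.mp hv).2]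

lemma dotProduct_submatrix_mulVec [CommSemiring R] [Fintype ι] [Fintype κ]
    (M : Matrix ι κ R) (f : V → ι) (g : W → κ) (x : V → R) (y : W → R) :
    x ⬝ᵥ M.submatrix f g *ᵥ y = fiberSum f x ⬝ᵥ M *ᵥ fiberSum g y := by
  have hy : M.submatrix f g *ᵥ y = (M *ᵥ fiberSum g y) ∘ f :=
    funext fun v ↦ comp_dotProduct_eq_dotProduct_fiberSum g (M (f v)) y
  rw [hy, dotProduct_comm, comp_dotProduct_eq_dotProduct_fiberSum, dotProduct_comm]

lemma fiberSum_dotProduct_self_le [CommRing R] [LinearOrder R] [IsStrictOrderedRing R] [Fintype ι]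
    {f : V → ι} {t : ℕ} (hf : ∀ i, Finset.card {v | f v = i} ≤ t) (x : V → R) :
    fiberSum f x ⬝ᵥ fiberSum f x ≤ t * (x ⬝ᵥ x) := by
  have fiber_bound (i : ι) : fiberSum f x i ^ 2 ≤ t * ∑ v with f v = i, x v ^ 2 :=
    sq_sum_le_card_mul_sum_sq.trans <|
      mul_le_mul_of_nonneg_right (mod_cast hf i) (Finset.sum_nonneg fun v _ ↦ sq_nonneg (x v))
  simp only [dotProduct, ← sq]
  calc ∑ i, fiberSum f x i ^ 2 ≤ ∑ i, t * ∑ v with f v = i, x v ^ 2 :=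
        Finset.sum_le_sum fun i _ ↦ fiber_bound i
    _ = t * ∑ v, x v ^ 2 := by rw [← Finset.mul_sum, Finset.sum_fiberwise]

end FiberSum

section CompleteGraph

variable {ι R : Type*} [Fintype ι] [DecidableEq ι] [CommRing R]

lemma dotProduct_adjMatrix_top_mulVec (s : ι → R) :
    s ⬝ᵥ (⊤ : SimpleGraph ι).adjMatrix R *ᵥ s = (∑ i, s i) ^ 2 - s ⬝ᵥ s := by
  have all_ones : (of 1 : Matrix ι ι R) *ᵥ s = fun _ ↦ ∑ i, s i := by
    ext; simp [mulVec, dotProduct]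
  rw [SimpleGraph.adjMatrix_completeGraph_eq_of_one_sub_one, sub_mulVec, one_mulVec,
    dotProduct_sub, all_ones, dotProduct, ← Finset.sum_mul, sq]

variable [LinearOrder R] [IsStrictOrderedRing R]

lemma neg_dotProduct_self_le_dotProduct_adjMatrix_top_mulVec (s : ι → R) :
    -(s ⬝ᵥ s) ≤ s ⬝ᵥ (⊤ : SimpleGraph ι).adjMatrix R *ᵥ s := by
  rw [dotProduct_adjMatrix_top_mulVec]
  linarith [sq_nonneg (∑ i, s i)]

lemma dotProduct_adjMatrix_top_mulVec_le (s : ι → R) :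
    s ⬝ᵥ (⊤ : SimpleGraph ι).adjMatrix R *ᵥ s ≤ (Fintype.card ι - 1) * (s ⬝ᵥ s) := by
  have cauchy_schwarz : (∑ i, s i) ^ 2 ≤ Fintype.card ι * (s ⬝ᵥ s) := by
    simpa only [dotProduct, ← sq, Finset.card_univ] using
      sq_sum_le_card_mul_sum_sq (s := Finset.univ) (f := s)
  rw [dotProduct_adjMatrix_top_mulVec]
  linarith

end CompleteGraph

section CompleteMultipartite

lemma adjMatrix_comap {V W R : Type*} [Zero R] [One R] (G : SimpleGraph W) [DecidableRel G.Adj]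
    (f : V → W) : (G.comap f).adjMatrix R = (G.adjMatrix R).submatrix f f :=
  rfl

variable {V ι R : Type*} [Fintype V] [CommRing R] [LinearOrder R] [IsStrictOrderedRing R]

lemma exists_dotProduct_mulVec_eq_of_hasEigenvalue [DecidableEq V] {A : Matrix V V R} {μ : R}
    (hμ : HasEigenvalue (toLin' A) μ) : ∃ x : V → R, 0 < x ⬝ᵥ x ∧ x ⬝ᵥ A *ᵥ x = μ * (x ⬝ᵥ x) := by
  obtain ⟨x, hx⟩ := hμ.exists_hasEigenvector
  have x_self_nonneg : 0 ≤ x ⬝ᵥ x := Finset.sum_nonneg fun v _ ↦ mul_self_nonneg (x v)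
  refine ⟨x, x_self_nonneg.lt_of_ne' (dotProduct_self_eq_zero.not.mpr hx.2), ?_⟩
  rw [← toLin'_apply, hx.apply_eq_smul, dotProduct_smul, smul_eq_mul]

variable [Fintype ι] [DecidableEq ι] {f : V → ι} {t : ℕ}

lemma dotProduct_adjMatrix_comap_top_mulVec_mem_Icc
    (hf : ∀ i, Finset.card {v | f v = i} ≤ t) (x : V → R) :
    x ⬝ᵥ ((⊤ : SimpleGraph ι).comap f).adjMatrix R *ᵥ x ∈
      Set.Icc (-t * (x ⬝ᵥ x)) (t * (Fintype.card ι - 1) * (x ⬝ᵥ x)) := by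
  have form_eq : x ⬝ᵥ ((⊤ : SimpleGraph ι).comap f).adjMatrix R *ᵥ x =
      fiberSum f x ⬝ᵥ (⊤ : SimpleGraph ι).adjMatrix R *ᵥ fiberSum f x := by
    rw [adjMatrix_comap, dotProduct_submatrix_mulVec]
  have fiberSum_self_le := fiberSum_dotProduct_self_le hf x
  constructor
  · calc -t * (x ⬝ᵥ x) ≤ -(fiberSum f x ⬝ᵥ fiberSum f x) := by linarith
      _ ≤ _ := neg_dotProduct_self_le_dotProduct_adjMatrix_top_mulVec _
      _ = _ := form_eq.symm
  · cases isEmpty_or_nonempty ι with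
    | inl _ =>
      have := Function.isEmpty f
      simp
    | inr _ =>
      have card_sub_one_nonneg : (0 : R) ≤ Fintype.card ι - 1 :=
        sub_nonneg.mpr (mod_cast Fintype.card_pos)
      calc _ = _ := form_eq
        _ ≤ (Fintype.card ι - 1) * (fiberSum f x ⬝ᵥ fiberSum f x) :=
            dotProduct_adjMatrix_top_mulVec_le _
        _ ≤ (Fintype.card ι - 1) * (t * (x ⬝ᵥ x)) :=
            mul_le_mul_of_nonneg_left fiberSum_self_le card_sub_one_nonneg
        _ = t * (Fintype.card ι - 1) * (x ⬝ᵥ x) := by ring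

theorem mem_Icc_of_hasEigenvalue_adjMatrix_comap_top [DecidableEq V]
    (hf : ∀ i, Finset.card {v | f v = i} ≤ t) {μ : R}
    (hμ : HasEigenvalue (toLin' (((⊤ : SimpleGraph ι).comap f).adjMatrix R)) μ) :
    μ ∈ Set.Icc (-t : R) (t * (Fintype.card ι - 1)) := by
  obtain ⟨x, x_self_pos, rayleigh⟩ := exists_dotProduct_mulVec_eq_of_hasEigenvalue hμ
  obtain ⟨lower, upper⟩ := dotProduct_adjMatrix_comap_top_mulVec_mem_Icc hf x
  exact ⟨le_of_mul_le_mul_right (lower.trans_eq rayleigh) x_self_pos,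
    le_of_mul_le_mul_right (rayleigh.symm.trans_le upper) x_self_pos⟩

end CompleteMultipartite

/-- The class of a vertex of `joinGraph t p` as a complete multipartite graph. Unlike for `part`,
each vertex of the clique is a class of its own. -/
def multipartiteClass (t p : ℕ) : (Fin t ⊕ Fin t) ⊕ Fin p → (Unit ⊕ Unit) ⊕ Fin p :=
  Sum.map (Sum.map (fun _ ↦ ()) (fun _ ↦ ())) id

lemma joinGraph_eq_comap_multipartiteClass (t p : ℕ) :
    joinGraph t p = (⊤ : SimpleGraph _).comap (multipartiteClass t p) := by
  ext u v
  rcases u with (u | u) | u <;> rcases v with (v | v) | v <;>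
    simp [joinGraph, part, multipartiteClass]

lemma adjJ_eq_adjMatrix_comap_multipartiteClass (t p : ℕ) :
    adjJ t p = ((⊤ : SimpleGraph _).comap (multipartiteClass t p)).adjMatrix ℝ := by
  ext u v
  simp only [adjJ, of_apply, SimpleGraph.adjMatrix_apply, joinGraph_eq_comap_multipartiteClass]

lemma card_multipartiteClass_fiber_le {t : ℕ} (ht : 1 ≤ t) (p : ℕ) (i : (Unit ⊕ Unit) ⊕ Fin p) :
    Finset.card {v | multipartiteClass t p v = i} ≤ t := by
  rw [Finset.card_filter, Fintype.sum_sum_type, Fintype.sum_sum_type]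
  rcases i with (_ | _) | i <;> simp [multipartiteClass, ht]

theorem joinGraph_eigenvalue_bounds_general (t p : ℕ) (ht : 1 ≤ t)
    (μ : ℝ) (hμ : LinearMap.ker (Matrix.toLin' (adjJ t p - μ • 1)) ≠ ⊥) :
    -(t : ℝ) ≤ μ ∧ μ ≤ (t : ℝ) * ((p : ℝ) + 1) := by
  have card_classes : (Fintype.card ((Unit ⊕ Unit) ⊕ Fin p) : ℝ) - 1 = p + 1 := by
    simp only [Fintype.card_sum, Fintype.card_unit, Fintype.card_fin]
    push_cast
    ring
  have hasEigenvalue : HasEigenvalue (toLin' (adjJ t p)) μ := by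
    rwa [hasEigenvalue_iff, eigenspace_def, one_eq_id, ← toLin'_one, ← map_smul, ← map_sub]
  rw [adjJ_eq_adjMatrix_comap_multipartiteClass] at hasEigenvalue
  rw [← card_classes]
  exact mem_Icc_of_hasEigenvalue_adjMatrix_comap_top (card_multipartiteClass_fiber_le ht p)
    hasEigenvalue

/-- For `t > p ≥ 1` and `t ≥ 2`, every eigenvalue `μ` of the cograph
`G = (t K_1 ⊗ t K_1) ⊗ K_p` satisfies `-t ≤ μ ≤ t(p+1)`. -/
theorem joinGraph_eigenvalue_bounds (t p : ℕ) (ht : 2 ≤ t) (hp : 1 ≤ p) (htp : p < t)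
    (μ : ℝ) (hμ : LinearMap.ker (Matrix.toLin' (adjJ t p - μ • 1)) ≠ ⊥) :
    -(t : ℝ) ≤ μ ∧ μ ≤ (t : ℝ) * ((p : ℝ) + 1) := by
  exact joinGraph_eigenvalue_bounds_general t p (one_le_two.trans ht) μ hμ
end
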